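/- For every finite alphabet Σ, no computable learner identifies the class of all total computable functions f : Σ* → Σ* in the limit from input-output observations alone. That is, for every computable learner L (mapping finite sequences of input-output pairs to codes of partial computable functions on Σ*), there exist a total computable function f : Σ* → Σ* and a surjection w : ℕ → Σ* such that there is no time t* and no fixed code R with: for all t ≥ t*, L((w_1, f(w_1)), …, (w_t, f(w_t))) = R and the function coded by R equals f. -/

import Mathlib

/-!
The learner is defeated on `0`/`1`-valued functions `target c g`, where `g : ℕ → Bool` is read
along the encodings of words and all words are presented in the computable order `word`.
Suppose the learner succeeded on every computable function.  Then every finite Boolean prefix `τ`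
has an extension on which the hypothesis differs from the one on `τ` (`exists_mind_change`):
otherwise the two computable functions continuing `τ` by constant `false` and by constant `true`
would receive the same final hypothesis, although they differ on a word of large encoding.
Such an extension can be found by unbounded search, because the learner is computable
(`exists_computable_search`).  Iterating the search (`chain`) produces a computable `g` along
which the hypothesis changes infinitely often, so the learner does not converge on `target c g`.
-/

/-!
STATEMENT 0: For every finite (nonempty) alphabet Σ, no computable learner identifies the
class of all total computable functions f : Σ* → Σ* in the limit from input-output
observations alone.

A learner is a computable map from finite sequences of input-output pairs to codes
(`Nat.Partrec.Code`) of partial computable functions; the partial function on `List Sg`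
coded by `R` is obtained by evaluating `R` on encodings.
-/

namespace Gold0

/-- The partial function on strings over `Sg` coded by the partial-recursive code `R`. -/
def codeFun (Sg : Type) [Primcodable Sg] (R : Nat.Partrec.Code) (x : List Sg) :
    Part (List Sg) :=
  (R.eval (Encodable.encode x)).bind fun m => Part.ofOption (Encodable.decode (α := List Sg) m)

/-- The finite observation sequence `(w_0, f w_0), …, (w_{t-1}, f w_{t-1})`. -/
def obs (Sg : Type) (f : List Sg → List Sg) (w : ℕ → List Sg) (t : ℕ) :
    List (List Sg × List Sg) :=
  (List.range t).map fun i => (w i, f (w i))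

/-- The computable enumeration of all words used as presentation.  Numbers that encode no word
give `[]`; since `decode₂` is used, `word n` otherwise has encoding exactly `n`. -/
def word (Sg : Type) [Primcodable Sg] (n : ℕ) : List Sg :=
  (Encodable.decode₂ (List Sg) n).getD []

/-- Two distinct output words, indexed by `Bool`. -/
def value {Sg : Type} (c : Sg) (b : Bool) : List Sg := bif b then [c] else []

/-- The two-valued word function whose value on `x` is the bit of `g` at the encoding of `x`. -/
def target {Sg : Type} [Primcodable Sg] (c : Sg) (g : ℕ → Bool) (x : List Sg) : List Sg :=
  value c (g (Encodable.encode x))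

/-- The observations along `word`, of length `τ.length`, determined by the Boolean prefix `τ`. -/
def data {Sg : Type} [Primcodable Sg] (c : Sg) (τ : List Bool) : List (List Sg × List Sg) :=
  (List.range τ.length).map fun i =>
    (word Sg i, value c (τ.getD (Encodable.encode (word Sg i)) false))

/-- The increasing sequence of prefixes obtained by iterating `τ ↦ τ ++ e τ` from `[]`. -/
def chain (e : List Bool → List Bool) (n : ℕ) : List Bool :=
  Nat.rec [] (fun _ τ => τ ++ e τ) n

theorem word_encode {Sg : Type} [Primcodable Sg] (x : List Sg) :
    word Sg (Encodable.encode x) = x := by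
  simp [word]

theorem word_surjective (Sg : Type) [Primcodable Sg] : Function.Surjective (word Sg) :=
  fun x => ⟨_, word_encode x⟩

/-- The observations up to time `n` only depend on the bits below `n`; the default word `[]` is
harmless here because its encoding is `0`. -/
theorem encode_word_le {Sg : Type} [Primcodable Sg] (n : ℕ) :
    Encodable.encode (word Sg n) ≤ n := by
  unfold word
  rcases h : Encodable.decode₂ (List Sg) n with _ | x
  · exact Nat.zero_le n
  · exact (Encodable.decode₂_eq_some.1 h).le

theorem primrec_word (Sg : Type) [Primcodable Sg] : Primrec (word Sg) :=
  Primrec.option_getD.comp Primrec.decode₂ (Primrec.const [])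

theorem primrec_value {Sg : Type} [Primcodable Sg] (c : Sg) : Primrec (value c) :=
  Primrec.dom_bool _

theorem computable_target {Sg : Type} [Primcodable Sg] (c : Sg) {g : ℕ → Bool}
    (hg : Computable g) : Computable (target c g) :=
  (primrec_value c).to_comp.comp (hg.comp Computable.encode)

theorem primrec_data {Sg : Type} [Primcodable Sg] (c : Sg) :
    Primrec (data c) := by
  refine Primrec.list_map (Primrec.list_range.comp Primrec.list_length) ?_
  have hw : Primrec fun p : List Bool × ℕ => word Sg p.2 := (primrec_word Sg).comp Primrec.snd
  exact Primrec.pair hw ((primrec_value c).comp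
    ((Primrec.list_getD false).comp Primrec.fst (Primrec.encode.comp hw)))

theorem obs_target {Sg : Type} [Primcodable Sg] (c : Sg) (g : ℕ → Bool) (τ : List Bool)
    (h : ∀ i < τ.length, τ.getD i false = g i) :
    obs Sg (target c g) (word Sg) τ.length = data c τ := by
  refine List.map_congr_left fun i hi => ?_
  rw [h _ ((encode_word_le i).trans_lt (List.mem_range.1 hi))]
  rfl

/-- A learner that succeeds on all computable functions changes its mind on some extension of any
given prefix. -/
theorem exists_mind_change {Sg : Type} [Primcodable Sg] (c : Sg)
    (L : List (List Sg × List Sg) → Nat.Partrec.Code)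
    (H : ∀ f : List Sg → List Sg, Computable f → ∃ (tstar : ℕ) (R : Nat.Partrec.Code),
      (∀ t, tstar ≤ t → L (obs Sg f (word Sg) t) = R) ∧
      (∀ x : List Sg, codeFun Sg R x = Part.some (f x)))
    (τ : List Bool) : ∃ ρ : List Bool, L (data c (τ ++ ρ)) ≠ L (data c τ) := by
  by_contra! hτ
  have key (b : Bool) (x : List Sg) :
      codeFun Sg (L (data c τ)) x = Part.some (target c (fun n => τ.getD n b) x) := by
    have hc : Computable fun n => τ.getD n b :=
      ((Primrec.list_getD b).comp (Primrec.const τ) Primrec.id).to_comp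
    obtain ⟨t, R, hR, hf⟩ := H _ (computable_target c hc)
    have ho := obs_target c (fun n => τ.getD n b) (τ ++ List.replicate t b) (by
      intro i hi
      simp only [List.getD_eq_getElem?_getD, List.getElem?_append, List.getElem?_replicate]
      simp only [List.length_append, List.length_replicate] at hi
      split_ifs with h1 h2
      · simp [h1]
      · simp [List.getElem?_eq_none (not_lt.1 h1)]
      · omega)
    have hl := hR (τ ++ List.replicate t b).length (by simp)
    rw [ho, hτ] at hl
    rw [hl, hf]
  have : Nonempty Sg := ⟨c⟩
  obtain ⟨_, ⟨x, rfl⟩, hx⟩ :=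
    (Set.infinite_range_of_injective (Encodable.encode_injective (α := List Sg))).exists_gt τ.length
  have h := Part.some_inj.1 ((key false x).symm.trans (key true x))
  simp [target, value, List.getElem?_eq_none hx.le] at h

/-- If every `τ` has an extension at which `L ∘ d` changes, such an extension can be computed. -/
theorem exists_computable_search {α : Type} [Primcodable α] (L : α → Nat.Partrec.Code)
    (hL : Computable L) (d : List Bool → α) (hd : Computable d)
    (h : ∀ τ, ∃ ρ : List Bool, L (d (τ ++ ρ)) ≠ L (d τ)) :
    ∃ e : List Bool → List Bool, Computable e ∧ ∀ τ, L (d (τ ++ e τ)) ≠ L (d τ) := by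
  classical
  let u (n : ℕ) : List Bool := (Encodable.decode n).getD []
  have hu : Computable u := Computable.option_getD Computable.decode (Computable.const [])
  let p (τ : List Bool) (n : ℕ) : Bool :=
    !decide (Encodable.encode (L (d (τ ++ u n))) = Encodable.encode (L (d τ)))
  have hp : Computable₂ p := by
    have hk : Computable fun τ : List Bool => Encodable.encode (L (d τ)) :=
      Computable.encode.comp (hL.comp hd)
    have heq : Computable₂ fun a b : ℕ => decide (a = b) := Primrec.eq.decide.to_comp
    exact Primrec.not.to_comp.comp (heq.comp
      (hk.comp (Computable.list_append.comp Computable.fst (hu.comp Computable.snd)))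
      (hk.comp Computable.fst))
  have hex (τ : List Bool) : ∃ n, p τ n = true := by
    obtain ⟨ρ, hρ⟩ := h τ
    exact ⟨Encodable.encode ρ, by simpa [p, u] using hρ⟩
  refine ⟨fun τ => u (Nat.find (hex τ)), hu.comp ?_, fun τ => ?_⟩
  · refine (Partrec.rfind hp.partrec₂).of_eq fun τ => Part.eq_some_iff.2 ?_
    refine Nat.mem_rfind.2 ⟨?_, fun {m} hm => ?_⟩
    · simpa using (Nat.find_spec (hex τ)).symm
    · simpa using (Bool.eq_false_iff.2 (Nat.find_min (hex τ) hm)).symm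
  · simpa [p] using Nat.find_spec (hex τ)

theorem computable_chain {e : List Bool → List Bool} (he : Computable e) :
    Computable (chain e) := by
  have hs : Computable fun q : ℕ × (ℕ × List Bool) => q.2.2 :=
    Computable.snd.comp Computable.snd
  have hh : Computable₂ fun (_ : ℕ) (q : ℕ × List Bool) => q.2 ++ e q.2 :=
    Computable.list_append.comp hs (he.comp hs)
  exact Computable.nat_rec (f := fun n : ℕ => n) (g := fun _ => ([] : List Bool))
    Computable.id (Computable.const []) hh

theorem chain_prefix (e : List Bool → List Bool) {m n : ℕ} (h : m ≤ n) :
    chain e m <+: chain e n := by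
  induction n, h using Nat.le_induction with
  | base => exact List.prefix_refl _
  | succ n _ ih => exact ih.trans (List.prefix_append _ (e (chain e n)))

theorem le_length_chain {e : List Bool → List Bool} (he : ∀ τ, e τ ≠ []) (n : ℕ) :
    n ≤ (chain e n).length := by
  induction n with
  | zero => exact Nat.zero_le _
  | succ n ih =>
    have h1 : (chain e (n + 1)).length = (chain e n).length + (e (chain e n)).length :=
      List.length_append
    have h2 := List.length_pos_of_ne_nil (he (chain e n))
    omega

/-- Every element of the chain is a prefix of the limit sequence. -/
theorem chain_getD {e : List Bool → List Bool} (he : ∀ τ, e τ ≠ []) (m i : ℕ)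
    (hi : i < (chain e m).length) :
    (chain e m).getD i false = (chain e (i + 1)).getD i false := by
  have hi' : i < (chain e (i + 1)).length := le_length_chain he (i + 1)
  rw [List.getD_eq_getElem _ _ hi, List.getD_eq_getElem _ _ hi']
  rcases le_total m (i + 1) with h | h
  · exact (chain_prefix e h).getElem hi
  · exact ((chain_prefix e h).getElem hi').symm

theorem no_learner_identifies_total_computable_in_the_limit
    (Sg : Type) [Fintype Sg] [DecidableEq Sg] [Primcodable Sg] [Nonempty Sg]
    (L : List (List Sg × List Sg) → Nat.Partrec.Code) (hL : Computable L) :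
    ∃ f : List Sg → List Sg, Computable f ∧
      ∃ w : ℕ → List Sg, Function.Surjective w ∧
        ¬ ∃ (tstar : ℕ) (R : Nat.Partrec.Code),
            (∀ t, tstar ≤ t → L (obs Sg f w t) = R) ∧
            (∀ x : List Sg, codeFun Sg R x = Part.some (f x)) := by
  by_contra hcon
  have H : ∀ f : List Sg → List Sg, Computable f → ∃ (tstar : ℕ) (R : Nat.Partrec.Code),
      (∀ t, tstar ≤ t → L (obs Sg f (word Sg) t) = R) ∧
      (∀ x : List Sg, codeFun Sg R x = Part.some (f x)) := fun f hf => by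
    by_contra hno
    exact hcon ⟨f, hf, word Sg, word_surjective Sg, hno⟩
  obtain ⟨c⟩ := ‹Nonempty Sg›
  obtain ⟨e, hec, he⟩ := exists_computable_search L hL (data c) (primrec_data c).to_comp
    (exists_mind_change c L H)
  have hne (τ : List Bool) : e τ ≠ [] := fun h0 => he τ (by rw [h0, List.append_nil])
  have hg : Computable fun n => (chain e (n + 1)).getD n false :=
    (Primrec.list_getD false).to_comp.comp
      ((computable_chain hec).comp Computable.succ) Computable.id
  obtain ⟨t, R, hR, -⟩ := H _ (computable_target c hg)
  have hconv (m : ℕ) (hm : t ≤ m) : L (data c (chain e m)) = R := by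
    rw [← obs_target c _ (chain e m) (chain_getD hne m)]
    exact hR _ (hm.trans (le_length_chain hne m))
  exact he (chain e t) ((hconv (t + 1) t.le_succ).trans (hconv t le_rfl).symm)

end Gold0
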